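/- Let Φ be a Young function satisfying the ∇2-condition. Then the Hardy–Littlewood maximal operator is of strong (Φ,Φ)-type: there exists C > 0 such that ∫_{ℝⁿ} Φ(Mf(x)) dx ≤ ∫_{ℝⁿ} Φ(C|f(x)|) dx for all f ∈ L^Φ(ℝⁿ), and consequently ‖Mf‖_{L^Φ(ℝⁿ)} ≤ C‖f‖_{L^Φ(ℝⁿ)}. -/

import Mathlib

open MeasureTheory

/-- The Hardy–Littlewood maximal operator on ℝⁿ. -/
noncomputable def hlMaximal {n : ℕ} (f : EuclideanSpace ℝ (Fin n) → ℝ)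
    (x : EuclideanSpace ℝ (Fin n)) : ℝ :=
  ⨆ r : {r : ℝ // 0 < r},
    (volume (Metric.ball x r.1)).toReal⁻¹ * ∫ z in Metric.ball x r.1, |f z|

/-- Membership in the Orlicz space L^Φ(ℝⁿ). -/
def MemOrlicz {n : ℕ} (Φ : ℝ → ℝ) (f : EuclideanSpace ℝ (Fin n) → ℝ) : Prop :=
  ∃ lam : ℝ, 0 < lam ∧ ∫⁻ x, ENNReal.ofReal (Φ (|f x| / lam)) < ⊤

/-- The Luxemburg norm on L^Φ(ℝⁿ). -/
noncomputable def luxNorm {n : ℕ} (Φ : ℝ → ℝ)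
    (f : EuclideanSpace ℝ (Fin n) → ℝ) : ℝ :=
  sInf {lam : ℝ | 0 < lam ∧ ∫⁻ x, ENNReal.ofReal (Φ (|f x| / lam)) ≤ 1}

open Metric Set Module
open scoped NNReal ENNReal

/-!
Let `K` be a doubling constant of `μ` (on `ℝⁿ`, `K = 2 ^ n`). The Vitali covering argument gives the
weak type `(1, 1)` inequality with constant `K ^ 3`, which, applied to the part of `f` above height
`t / 2`, yields `t * μ {M f > t} ≤ 2 * K ^ 3 * ∫_{|f| > t / 2} |f|`. Choose the levels
`t = l ^ k`, `k ∈ ℤ`, where `l` is the constant of the `∇₂`-condition, weight the estimates by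
`Φ (l ^ (k + 1))` and sum: after exchanging sum and integral, the integrand at `z` is, up to a
constant, `|f z|` times `∑_{l ^ k < 2 |f z|} Φ (l ^ (k + 1)) / l ^ k`. By the `∇₂`-condition
`Φ t / t` at least doubles from `t` to `l t`, so this sum is dominated by a geometric series whose
last term is comparable to `Φ (2 l |f z|) / |f z|`. Convexity moves the constant inside `Φ`. Since
`M` is homogeneous, applying the integral inequality to multiples of `f` gives the norm inequality.
-/

/-- A Young function on `[0, ∞)`, extended arbitrarily to `ℝ`. -/
structure IsYoungFunction (Φ : ℝ → ℝ) : Prop where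
  zero : Φ 0 = 0
  nonneg : ∀ t, 0 ≤ t → 0 ≤ Φ t
  convexOn : ConvexOn ℝ (Ici 0) Φ

/-- The `∇₂`-condition with constant `l`: passing from `t` to `l * t` at least doubles
`Φ t / t`. -/
structure NablaTwo (Φ : ℝ → ℝ) (l : ℝ) : Prop where
  one_lt : 1 < l
  two_mul_mul_le : ∀ t > 0, 2 * l * Φ t ≤ Φ (l * t)

section Young

variable {Φ : ℝ → ℝ}

namespace IsYoungFunction

lemma apply_mul_le (hΦ : IsYoungFunction Φ) {a t : ℝ} (ha₀ : 0 ≤ a) (ha₁ : a ≤ 1) (ht : 0 ≤ t) :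
    Φ (a * t) ≤ a * Φ t := by
  simpa [hΦ.zero] using
    hΦ.convexOn.2 (mem_Ici.2 ht) (mem_Ici.2 le_rfl) ha₀ (sub_nonneg.2 ha₁) (add_sub_cancel a 1)

lemma mul_apply_le (hΦ : IsYoungFunction Φ) {a t : ℝ} (ha : 1 ≤ a) (ht : 0 ≤ t) :
    a * Φ t ≤ Φ (a * t) := by
  have ha₀ : 0 < a := one_pos.trans_le ha
  have h := hΦ.apply_mul_le (inv_nonneg.2 ha₀.le) (inv_le_one_of_one_le₀ ha)
    (mul_nonneg ha₀.le ht)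
  rwa [inv_mul_cancel_left₀ ha₀.ne', le_inv_mul_iff₀ ha₀] at h

lemma monotoneOn_div_self (hΦ : IsYoungFunction Φ) :
    MonotoneOn (fun t => Φ t / t) (Ioi 0) := fun s hs t ht hst => by
  simpa [hΦ.zero] using hΦ.convexOn.secant_mono self_mem_Ici (mem_Ici_of_Ioi hs)
    (mem_Ici_of_Ioi ht) (ne_of_gt hs) (ne_of_gt ht) hst

lemma monotoneOn (hΦ : IsYoungFunction Φ) : MonotoneOn Φ (Ici 0) := by
  intro s hs t ht hst
  rcases (mem_Ici.1 ht).eq_or_lt with rfl | ht₀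
  · rw [le_antisymm hst hs]
  have hst' : s / t ≤ 1 := div_le_one_of_le₀ hst ht
  calc Φ s = Φ (s / t * t) := by rw [div_mul_cancel₀ s ht₀.ne']
    _ ≤ s / t * Φ t := hΦ.apply_mul_le (div_nonneg hs ht) hst' ht
    _ ≤ Φ t := mul_le_of_le_one_left (hΦ.nonneg t ht) hst'

lemma ofReal_apply_le_tsum_zpow (hΦ : IsYoungFunction Φ) {l : ℝ} (hl : 1 < l) {t : ℝ}
    (ht : 0 ≤ t) :
    ENNReal.ofReal (Φ t) ≤
      ∑' k : ℤ, if l ^ k < t then ENNReal.ofReal (Φ (l ^ (k + 1))) else 0 := by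
  rcases ht.eq_or_lt with rfl | ht
  · simp [hΦ.zero]
  obtain ⟨K, hKt, htK⟩ := exists_mem_Ioc_zpow ht hl
  calc ENNReal.ofReal (Φ t)
      ≤ ENNReal.ofReal (Φ (l ^ (K + 1))) :=
        ENNReal.ofReal_le_ofReal (hΦ.monotoneOn ht.le (ht.le.trans htK) htK)
    _ = if l ^ K < t then ENNReal.ofReal (Φ (l ^ (K + 1))) else 0 := (if_pos hKt).symm
    _ ≤ _ := ENNReal.le_tsum K

end IsYoungFunction

namespace NablaTwo

variable {l : ℝ}

lemma apply_div_pow_div_le (h : NablaTwo Φ l) {t : ℝ} (ht : 0 < t) (j : ℕ) :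
    Φ (t / l ^ j) / (t / l ^ j) ≤ 2⁻¹ ^ j * (Φ t / t) := by
  have hl : 0 < l := one_pos.trans h.one_lt
  induction j with
  | zero => simp
  | succ j ih =>
    set s := t / l ^ (j + 1) with hs
    have hs₀ : 0 < s := by positivity
    have hls : t / l ^ j = l * s := by rw [hs, pow_succ]; field_simp
    have hdouble : 2 * (Φ s / s) ≤ Φ (l * s) / (l * s) := by
      rw [le_div_iff₀ (by positivity)]
      calc 2 * (Φ s / s) * (l * s) = 2 * l * Φ s := by field_simp
        _ ≤ Φ (l * s) := h.two_mul_mul_le s hs₀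
    rw [hls] at ih
    rw [pow_succ]
    linarith

lemma apply_zpow_div_le (h : NablaTwo Φ l) (hΦ : IsYoungFunction Φ) {t : ℝ} {K : ℤ}
    (hK : l ^ K ≤ t) (j : ℕ) :
    Φ (l ^ (K - j + 1)) / l ^ (K - j) ≤ 2⁻¹ ^ j * (Φ (l * t) / t) := by
  have hl : 0 < l := one_pos.trans h.one_lt
  have ht : 0 < t := (zpow_pos hl K).trans_le hK
  have hpow : l ^ (K - j + 1) = l * l ^ K / l ^ j := by
    rw [zpow_add_one₀ hl.ne', zpow_sub₀ hl.ne', zpow_natCast]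
    ring
  have hpow' : l ^ (K - j : ℤ) = l * l ^ K / l ^ j / l := by
    rw [← hpow, zpow_add_one₀ hl.ne', mul_div_cancel_right₀ _ hl.ne']
  calc Φ (l ^ (K - j + 1)) / l ^ (K - j)
      = l * (Φ (l * l ^ K / l ^ j) / (l * l ^ K / l ^ j)) := by
        rw [hpow, hpow', div_div_eq_mul_div, mul_div_assoc, mul_div_left_comm]
    _ ≤ l * (2⁻¹ ^ j * (Φ (l * l ^ K) / (l * l ^ K))) := by
        gcongr
        exact h.apply_div_pow_div_le (by positivity) j
    _ ≤ l * (2⁻¹ ^ j * (Φ (l * t) / (l * t))) := by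
        gcongr l * (_ * ?_)
        exact hΦ.monotoneOn_div_self (mem_Ioi.2 (by positivity)) (mem_Ioi.2 (by positivity))
          (by gcongr)
    _ = 2⁻¹ ^ j * (Φ (l * t) / t) := by field_simp

/-- A discrete form of the Hardy inequality `∫₀ᵗ s⁻¹ dΦ(s) ≤ C Φ(t) / t`. -/
lemma tsum_zpow_le (h : NablaTwo Φ l) (hΦ : IsYoungFunction Φ) {t : ℝ} (ht : 0 < t) :
    ∑' k : ℤ, (if l ^ k < t then ENNReal.ofReal (Φ (l ^ (k + 1)) / l ^ k) else 0) ≤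
      2 * ENNReal.ofReal (Φ (l * t) / t) := by
  obtain ⟨K, hKt, htK⟩ := exists_mem_Ioc_zpow ht h.one_lt
  have hinj : Function.Injective fun j : ℕ => K - (j : ℤ) := fun i j hij => by simpa using hij
  rw [← hinj.tsum_eq fun k hk => ?levels]
  case levels =>
    have hkt : l ^ k < t := by
      by_contra hkt
      simp [hkt] at hk
    have hkK : k < K + 1 := (zpow_lt_zpow_iff_right₀ h.one_lt).1 (hkt.trans_le htK)
    exact ⟨(K - k).toNat, by dsimp only; lia⟩
  rw [← ENNReal.tsum_geometric_two, ← ENNReal.tsum_mul_right]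
  refine ENNReal.tsum_le_tsum fun j => ?_
  have hhalf : (2⁻¹ : ℝ≥0∞) ^ j = ENNReal.ofReal (2⁻¹ ^ j) := by
    rw [ENNReal.ofReal_pow (by norm_num), ENNReal.ofReal_inv_of_pos two_pos, ENNReal.ofReal_ofNat]
  rw [hhalf, ← ENNReal.ofReal_mul (by positivity)]
  split_ifs
  · exact ENNReal.ofReal_le_ofReal (h.apply_zpow_div_le hΦ hKt.le j)
  · exact zero_le

lemma mul_tsum_zpow_le (h : NablaTwo Φ l) (hΦ : IsYoungFunction Φ) {A : ℝ} (hA : 1 ≤ A)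
    (y : ℝ≥0) :
    ∑' k : ℤ, ENNReal.ofReal (Φ (l ^ (k + 1))) * (ENNReal.ofReal (A / l ^ k) *
      if l ^ k < 2 * y then (y : ℝ≥0∞) else 0) ≤ ENNReal.ofReal (Φ (2 * A * l * y)) := by
  have hl : 0 < l := one_pos.trans h.one_lt
  rcases eq_zero_or_pos y with rfl | hy
  · simp
  have hterm (k : ℤ) : ENNReal.ofReal (Φ (l ^ (k + 1))) * (ENNReal.ofReal (A / l ^ k) *
        if l ^ k < 2 * y then (y : ℝ≥0∞) else 0) =
      ENNReal.ofReal (A * y) *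
        if l ^ k < 2 * y then ENNReal.ofReal (Φ (l ^ (k + 1)) / l ^ k) else 0 := by
    split_ifs
    · have hΦk : 0 ≤ Φ (l ^ (k + 1)) := hΦ.nonneg _ (by positivity)
      rw [← ENNReal.ofReal_coe_nnreal, ← ENNReal.ofReal_mul (by positivity),
        ← ENNReal.ofReal_mul hΦk, ← ENNReal.ofReal_mul (by positivity)]
      congr 1
      ring
    · simp only [mul_zero]
  have hy' : (0 : ℝ) < 2 * y := by positivity
  simp_rw [hterm, ENNReal.tsum_mul_left]
  calc ENNReal.ofReal (A * y) *
        ∑' k : ℤ, (if l ^ k < 2 * y then ENNReal.ofReal (Φ (l ^ (k + 1)) / l ^ k) else 0)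
      ≤ ENNReal.ofReal (A * y) * (2 * ENNReal.ofReal (Φ (l * (2 * y)) / (2 * y))) := by
        gcongr
        exact h.tsum_zpow_le hΦ hy'
    _ = ENNReal.ofReal (A * Φ (l * (2 * y))) := by
        rw [← ENNReal.ofReal_ofNat 2, ← ENNReal.ofReal_mul zero_le_two,
          ← ENNReal.ofReal_mul (by positivity)]
        congr 1
        field_simp
    _ ≤ ENNReal.ofReal (Φ (2 * A * l * y)) := by
        refine ENNReal.ofReal_le_ofReal
          ((hΦ.mul_apply_le hA (by positivity)).trans_eq (congrArg Φ ?_))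
        ring

end NablaTwo

end Young

section Orlicz

variable {α : Type*} [MeasurableSpace α] {μ : Measure α} {Φ : ℝ → ℝ} {f g : α → ℝ}

/-- The Orlicz space `L^Φ(μ)`. As for `MemOrlicz`, no measurability is asked of `f`. -/
def MemOrliczSpace (μ : Measure α) (Φ : ℝ → ℝ) (f : α → ℝ) : Prop :=
  ∃ lam : ℝ, 0 < lam ∧ ∫⁻ x, ENNReal.ofReal (Φ (|f x| / lam)) ∂μ < ⊤

/-- The Luxemburg norm on `L^Φ(μ)`; outside this space it has the junk value `sInf ∅ = 0`. -/
noncomputable def luxemburgNorm (μ : Measure α) (Φ : ℝ → ℝ) (f : α → ℝ) : ℝ :=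
  sInf {lam : ℝ | 0 < lam ∧ ∫⁻ x, ENNReal.ofReal (Φ (|f x| / lam)) ∂μ ≤ 1}

lemma MemOrliczSpace.exists_lintegral_le_one (hΦ : IsYoungFunction Φ)
    (hf : MemOrliczSpace μ Φ f) :
    ∃ lam : ℝ, 0 < lam ∧ ∫⁻ x, ENNReal.ofReal (Φ (|f x| / lam)) ∂μ ≤ 1 := by
  obtain ⟨lam, hlam, hfin⟩ := hf
  set I := ∫⁻ x, ENNReal.ofReal (Φ (|f x| / lam)) ∂μ
  set a := I.toReal + 1 with ha
  have ha₀ : 0 < a := by positivity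
  have ha₁ : a⁻¹ ≤ 1 := inv_le_one_of_one_le₀ (by simp [ha])
  refine ⟨a * lam, by positivity, ?_⟩
  calc ∫⁻ x, ENNReal.ofReal (Φ (|f x| / (a * lam))) ∂μ
      ≤ ∫⁻ x, ENNReal.ofReal a⁻¹ * ENNReal.ofReal (Φ (|f x| / lam)) ∂μ := by
        refine lintegral_mono fun x => ?_
        rw [← ENNReal.ofReal_mul (by positivity), div_mul_eq_div_div_swap, ← inv_mul_eq_div a]
        exact ENNReal.ofReal_le_ofReal (hΦ.apply_mul_le (by positivity) ha₁ (by positivity))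
    _ = ENNReal.ofReal (a⁻¹ * I.toReal) := by
        rw [lintegral_const_mul' _ _ ENNReal.ofReal_ne_top, ENNReal.ofReal_mul (by positivity),
          ENNReal.ofReal_toReal hfin.ne]
    _ ≤ 1 := by
        rw [ENNReal.ofReal_le_one, inv_mul_le_one₀ ha₀]
        simp [ha]

lemma luxemburgNorm_le_mul_of_lintegral_le (hΦ : IsYoungFunction Φ) {C : ℝ} (hC : 0 < C)
    (hf : MemOrliczSpace μ Φ f)
    (h : ∀ lam > 0, ∫⁻ x, ENNReal.ofReal (Φ (|g x| / lam)) ∂μ ≤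
      ∫⁻ x, ENNReal.ofReal (Φ (C * (|f x| / lam))) ∂μ) :
    luxemburgNorm μ Φ g ≤ C * luxemburgNorm μ Φ f := by
  rw [← div_le_iff₀' hC]
  refine le_csInf (hf.exists_lintegral_le_one hΦ) fun lam ⟨hlam, hf_lam⟩ => ?_
  rw [div_le_iff₀' hC]
  refine csInf_le ⟨0, fun _ hb => hb.1.le⟩ ⟨by positivity, (h _ (by positivity)).trans ?_⟩
  simpa only [mul_div_mul_left _ _ hC.ne', ← mul_div_assoc] using hf_lam

lemma lintegral_ofReal_comp_le_tsum_zpow (hΦ : IsYoungFunction Φ) {l : ℝ} (hl : 1 < l)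
    (hg : ∀ x, 0 ≤ g x) :
    ∫⁻ x, ENNReal.ofReal (Φ (g x)) ∂μ ≤
      ∑' k : ℤ, ENNReal.ofReal (Φ (l ^ (k + 1))) * μ {x | l ^ k < g x} := by
  set E : ℤ → Set α := fun k => toMeasurable μ {x | l ^ k < g x}
  have hE (k : ℤ) : MeasurableSet (E k) := measurableSet_toMeasurable _ _
  calc ∫⁻ x, ENNReal.ofReal (Φ (g x)) ∂μ
      ≤ ∫⁻ x, ∑' k : ℤ, (E k).indicator (fun _ => ENNReal.ofReal (Φ (l ^ (k + 1)))) x ∂μ := by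
        refine lintegral_mono fun x => (hΦ.ofReal_apply_le_tsum_zpow hl (hg x)).trans
          (ENNReal.tsum_le_tsum fun k => ?_)
        split_ifs with hk
        · rw [indicator_of_mem (subset_toMeasurable μ {x | l ^ k < g x} hk)]
        · exact zero_le
    _ = ∑' k : ℤ, ENNReal.ofReal (Φ (l ^ (k + 1))) * μ {x | l ^ k < g x} := by
        rw [lintegral_tsum fun k => (measurable_const.indicator (hE k)).aemeasurable]
        simp_rw [lintegral_indicator_const (hE _), E, measure_toMeasurable]

lemma NablaTwo.tsum_zpow_mul_setLIntegral_le {l : ℝ} (h : NablaTwo Φ l) (hΦ : IsYoungFunction Φ)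
    {A : ℝ} (hA : 1 ≤ A) {u : α → ℝ≥0} (hu : Measurable u) :
    ∑' k : ℤ, ENNReal.ofReal (Φ (l ^ (k + 1))) *
        (ENNReal.ofReal (A / l ^ k) * ∫⁻ z in {z | l ^ k < 2 * u z}, u z ∂μ) ≤
      ∫⁻ z, ENNReal.ofReal (Φ (2 * A * l * u z)) ∂μ := by
  have hlevel (k : ℤ) : MeasurableSet {z | l ^ k < 2 * (u z : ℝ)} :=
    measurableSet_lt measurable_const (by fun_prop)
  have hmeas (k : ℤ) : Measurable ({z | l ^ k < 2 * (u z : ℝ)}.indicator fun z => (u z : ℝ≥0∞)) :=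
    hu.coe_nnreal_ennreal.indicator (hlevel k)
  calc _ = ∑' k : ℤ, ∫⁻ z, ENNReal.ofReal (Φ (l ^ (k + 1))) * (ENNReal.ofReal (A / l ^ k) *
          {z | l ^ k < 2 * (u z : ℝ)}.indicator (fun z => (u z : ℝ≥0∞)) z) ∂μ := by
        congr 1 with k
        rw [lintegral_const_mul _ ((hmeas k).const_mul _), lintegral_const_mul _ (hmeas k),
          lintegral_indicator (hlevel k)]
    _ = ∫⁻ z, ∑' k : ℤ, ENNReal.ofReal (Φ (l ^ (k + 1))) * (ENNReal.ofReal (A / l ^ k) *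
          {z | l ^ k < 2 * (u z : ℝ)}.indicator (fun z => (u z : ℝ≥0∞)) z) ∂μ :=
        (lintegral_tsum fun k => (((hmeas k).const_mul _).const_mul _).aemeasurable).symm
    _ ≤ ∫⁻ z, ENNReal.ofReal (Φ (2 * A * l * u z)) ∂μ :=
        lintegral_mono fun z => by
          simpa only [indicator_apply, mem_ofPred_eq] using h.mul_tsum_zpow_le hΦ hA (u z)

end Orlicz

lemma exists_measurable_le_abs_forall_setLIntegral_enorm_eq {α : Type*} [MeasurableSpace α]
    (μ : Measure α) [SFinite μ] (f : α → ℝ) :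
    ∃ u : α → ℝ≥0, Measurable u ∧ (∀ x, u x ≤ |f x|) ∧
      ∀ s, ∫⁻ x in s, ‖f x‖ₑ ∂μ = ∫⁻ x in s, u x ∂μ := by
  obtain ⟨g, hg, hgf, hfg⟩ := exists_measurable_le_forall_setLIntegral_eq μ fun x => ‖f x‖ₑ
  have hg_coe (x : α) : ((g x).toNNReal : ℝ≥0∞) = g x :=
    ENNReal.coe_toNNReal (ne_top_of_le_ne_top enorm_ne_top (hgf x))
  refine ⟨fun x => (g x).toNNReal, hg.ennreal_toNNReal, fun x => ?_, by simpa only [hg_coe]⟩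
  have hx : (g x).toNNReal ≤ ‖f x‖₊ := ENNReal.coe_le_coe.1 ((hg_coe x).trans_le (hgf x))
  simpa using NNReal.coe_le_coe.2 hx

lemma exists_countable_disjoint_ball_cover {X : Type*} [PseudoMetricSpace X]
    [TopologicalSpace.SeparableSpace X] {A : Set X} {r : X → ℝ} {R : ℝ}
    (hr : ∀ x ∈ A, 0 < r x) (hrR : ∀ x ∈ A, r x ≤ R) :
    ∃ u ⊆ A, u.Countable ∧ (u.PairwiseDisjoint fun b => ball b (r b)) ∧
      A ⊆ ⋃ b ∈ u, ball b (2 ^ 3 * r b) := by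
  obtain ⟨u, huA, hdisj, hcover⟩ :=
    Vitali.exists_disjoint_subfamily_covering_enlargement_closedBall A id r R hrR 4 (by norm_num)
  have hdisj' : u.PairwiseDisjoint fun b => ball b (r b) :=
    hdisj.mono fun _ => ball_subset_closedBall
  refine ⟨u, huA, hdisj'.countable_of_isOpen (fun _ _ => isOpen_ball)
    fun b hb => nonempty_ball.2 (hr b (huA hb)), hdisj', fun a ha => ?_⟩
  obtain ⟨b, hb, hab⟩ := hcover a ha
  have hb₀ := hr b (huA hb)
  exact mem_biUnion hb
    (closedBall_subset_ball (by linarith) (hab (mem_closedBall_self (hr a ha).le)))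

section Doubling

variable {X : Type*} [PseudoMetricSpace X] [MeasurableSpace X] {μ : Measure X} {K : ℝ≥0}

/-- A globally doubling measure. Mathlib's `IsUnifLocDoublingMeasure` only controls small balls,
whereas the maximal function sees all radii. The constant is normalised to be at least `1`. -/
structure IsDoubling (μ : Measure X) (K : ℝ≥0) : Prop where
  one_le : 1 ≤ K
  measure_ball_two_mul_le : ∀ x r, μ (ball x (2 * r)) ≤ K * μ (ball x r)

lemma isDoubling_addHaar {E : Type*} [NormedAddCommGroup E] [NormedSpace ℝ E]
    [FiniteDimensional ℝ E] [MeasurableSpace E] [BorelSpace E] (μ : Measure E)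
    [μ.IsAddHaarMeasure] : IsDoubling μ (2 ^ finrank ℝ E) where
  one_le := one_le_pow₀ one_le_two
  measure_ball_two_mul_le x r := by
    rw [Measure.addHaar_ball_mul_of_pos μ x two_pos, Measure.addHaar_ball_center μ x r,
      ENNReal.ofReal_pow zero_le_two]
    simp

/-- The centres of the balls on which the average of `h` is at least `s`. -/
def largeAverageSet (μ : Measure X) (h : X → ℝ≥0∞) (s : ℝ≥0∞) : Set X :=
  {x | ∃ r : ℝ, 0 < r ∧ s * μ (ball x r) ≤ ∫⁻ z in ball x r, h z ∂μ}

/-- The centred Hardy–Littlewood maximal function. It has the junk value `0` where the averages of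
`|f|` are unbounded, and balls on which `f` is not integrable contribute `0`. -/
noncomputable def maximalFunction (μ : Measure X) (f : X → ℝ) (x : X) : ℝ :=
  ⨆ r : {r : ℝ // 0 < r}, (μ (ball x r.1)).toReal⁻¹ * ∫ z in ball x r.1, |f z| ∂μ

lemma maximalFunction_nonneg (f : X → ℝ) (x : X) : 0 ≤ maximalFunction μ f x :=
  Real.iSup_nonneg fun _ => by positivity

lemma maximalFunction_div (f : X → ℝ) {c : ℝ} (hc : 0 ≤ c) (x : X) :
    maximalFunction μ (fun z => f z / c) x = maximalFunction μ f x / c := by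
  simp only [maximalFunction, abs_div, abs_of_nonneg hc, integral_div, ← mul_div_assoc]
  simp only [div_eq_mul_inv, Real.iSup_mul_of_nonneg (inv_nonneg.2 hc)]

lemma setOf_lt_maximalFunction_subset (f : X → ℝ) {t : ℝ} (ht : 0 ≤ t) :
    {x | t < maximalFunction μ f x} ⊆
      largeAverageSet μ (fun z => ‖f z‖ₑ) (ENNReal.ofReal t) := by
  intro x (hx : t < maximalFunction μ f x)
  have : Nonempty {r : ℝ // 0 < r} := ⟨⟨1, one_pos⟩⟩
  obtain ⟨⟨r, hr⟩, htr⟩ := exists_lt_of_lt_ciSup hx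
  set V := (μ (ball x r)).toReal with hV
  have hV₀ : 0 < V := by
    refine ENNReal.toReal_nonneg.lt_of_ne fun hV₀ => htr.not_ge ?_
    rwa [hV, ← hV₀, inv_zero, zero_mul]
  have hfin : μ (ball x r) ≠ ⊤ := (ENNReal.toReal_pos_iff.1 hV₀).2.ne
  refine ⟨r, hr, ?_⟩
  calc ENNReal.ofReal t * μ (ball x r)
      = ENNReal.ofReal (t * V) := by rw [ENNReal.ofReal_mul ht, ENNReal.ofReal_toReal hfin]
    _ ≤ ENNReal.ofReal (∫ z in ball x r, |f z| ∂μ) := by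
        refine ENNReal.ofReal_le_ofReal ?_
        rw [mul_comm, ← le_inv_mul_iff₀ hV₀]
        exact htr.le
    _ ≤ ‖∫ z in ball x r, |f z| ∂μ‖ₑ := Real.ofReal_le_enorm _
    _ ≤ ∫⁻ z in ball x r, ‖f z‖ₑ ∂μ := by
        simpa only [Real.enorm_abs] using
          enorm_integral_le_lintegral_enorm (μ := μ.restrict (ball x r)) fun z => |f z|

namespace IsDoubling

lemma measure_ball_two_pow_mul_le (hμ : IsDoubling μ K) (x : X) (r : ℝ) (k : ℕ) :
    μ (ball x (2 ^ k * r)) ≤ K ^ k * μ (ball x r) := by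
  induction k with
  | zero => simp
  | succ k ih =>
    calc μ (ball x (2 ^ (k + 1) * r)) = μ (ball x (2 * (2 ^ k * r))) := by ring_nf
      _ ≤ K * μ (ball x (2 ^ k * r)) := hμ.measure_ball_two_mul_le x _
      _ ≤ K * (K ^ k * μ (ball x r)) := by gcongr
      _ = K ^ (k + 1) * μ (ball x r) := by ring

lemma measure_ball_lt_top (hμ : IsDoubling μ K) [IsLocallyFiniteMeasure μ] (x : X) (r : ℝ) :
    μ (ball x r) < ⊤ := by
  obtain ⟨s, hs, hsfin⟩ := μ.finiteAt_nhds x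
  obtain ⟨ε, hε, hεs⟩ := Metric.mem_nhds_iff.1 hs
  obtain ⟨k, hk⟩ := pow_unbounded_of_one_lt (r / ε) one_lt_two
  calc μ (ball x r) ≤ μ (ball x (2 ^ k * ε)) := by
        gcongr
        exact ((div_lt_iff₀ hε).1 hk).le
    _ ≤ K ^ k * μ (ball x ε) := hμ.measure_ball_two_pow_mul_le x ε k
    _ < ⊤ := ENNReal.mul_lt_top (ENNReal.pow_lt_top ENNReal.coe_lt_top)
        ((measure_mono hεs).trans_lt hsfin)

variable [SecondCountableTopology X] [OpensMeasurableSpace X]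

lemma mul_measure_le_of_forall_ball (hμ : IsDoubling μ K) {h : X → ℝ≥0∞} {s : ℝ≥0∞} {A : Set X}
    {r : X → ℝ} {R : ℝ} (hr : ∀ x ∈ A, 0 < r x) (hrR : ∀ x ∈ A, r x ≤ R)
    (hA : ∀ x ∈ A, s * μ (ball x (r x)) ≤ ∫⁻ z in ball x (r x), h z ∂μ) :
    s * μ A ≤ K ^ 3 * ∫⁻ z, h z ∂μ := by
  obtain ⟨u, huA, hcount, hdisj, hcover⟩ := exists_countable_disjoint_ball_cover hr hrR
  calc s * μ A
      ≤ s * ∑' b : u, μ (ball (b : X) (2 ^ 3 * r b)) := by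
        gcongr
        exact (measure_mono hcover).trans (measure_biUnion_le _ hcount _)
    _ ≤ s * ∑' b : u, K ^ 3 * μ (ball (b : X) (r b)) := by
        gcongr with b
        exact hμ.measure_ball_two_pow_mul_le _ _ 3
    _ = K ^ 3 * ∑' b : u, s * μ (ball (b : X) (r b)) := by
        simp_rw [ENNReal.tsum_mul_left]
        ring
    _ ≤ K ^ 3 * ∑' b : u, ∫⁻ z in ball (b : X) (r b), h z ∂μ := by
        gcongr with b
        exact hA b (huA b.2)
    _ = K ^ 3 * ∫⁻ z in ⋃ b ∈ u, ball b (r b), h z ∂μ := by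
        rw [lintegral_biUnion hcount (fun _ _ => measurableSet_ball) hdisj]
    _ ≤ K ^ 3 * ∫⁻ z, h z ∂μ := by
        gcongr
        exact Measure.restrict_le_self

lemma mul_measure_largeAverageSet_le (hμ : IsDoubling μ K) (h : X → ℝ≥0∞) (s : ℝ≥0∞) :
    s * μ (largeAverageSet μ h s) ≤ K ^ 3 * ∫⁻ z, h z ∂μ := by
  set A : ℕ → Set X := fun N =>
    {x | ∃ r : ℝ, 0 < r ∧ r ≤ N ∧ s * μ (ball x r) ≤ ∫⁻ z in ball x r, h z ∂μ}
  have hA_iUnion : largeAverageSet μ h s = ⋃ N, A N := by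
    ext x
    simp only [largeAverageSet, A, mem_ofPred_eq, mem_iUnion]
    refine ⟨fun ⟨r, hr, hx⟩ => ?_, fun ⟨_, r, hr, _, hx⟩ => ⟨r, hr, hx⟩⟩
    obtain ⟨N, hN⟩ := exists_nat_ge r
    exact ⟨N, r, hr, hN, hx⟩
  have hA_mono : Monotone A := fun N N' hN x ⟨r, hr, hrN, hx⟩ =>
    ⟨r, hr, hrN.trans (by exact_mod_cast hN), hx⟩
  rw [hA_iUnion, hA_mono.measure_iUnion, ENNReal.mul_iSup]
  refine iSup_le fun N => ?_
  choose! r hr hrN hx using fun x (hx : x ∈ A N) => hx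
  exact hμ.mul_measure_le_of_forall_ball hr hrN hx

lemma mul_measure_largeAverageSet_add_self_le (hμ : IsDoubling μ K) [IsLocallyFiniteMeasure μ]
    {h : X → ℝ≥0∞} (hh : Measurable h) {s : ℝ≥0∞} (hs : s ≠ ⊤) :
    s * μ (largeAverageSet μ h (s + s)) ≤ K ^ 3 * ∫⁻ z in {z | s < h z}, h z ∂μ := by
  rw [← lintegral_indicator (measurableSet_lt measurable_const hh)]
  refine le_trans ?_ (hμ.mul_measure_largeAverageSet_le _ s)
  gcongr s * μ ?_
  rintro x ⟨r, hr, hx⟩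
  have htrunc : ∫⁻ z in ball x r, h z ∂μ ≤
      (∫⁻ z in ball x r, {z | s < h z}.indicator h z ∂μ) + s * μ (ball x r) := by
    rw [← setLIntegral_const, ← lintegral_add_right _ measurable_const]
    refine lintegral_mono fun z => ?_
    by_cases hz : s < h z
    · simp [indicator, hz]
    · simp [indicator, hz, not_lt.1 hz]
  refine ⟨r, hr, ?_⟩
  rw [add_mul] at hx
  exact (ENNReal.add_le_add_iff_right
    (ENNReal.mul_ne_top hs (hμ.measure_ball_lt_top x r).ne)).1 (hx.trans htrunc)

lemma measure_lt_maximalFunction_le (hμ : IsDoubling μ K) [IsLocallyFiniteMeasure μ] {f : X → ℝ}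
    {u : X → ℝ≥0} (hu : Measurable u)
    (hfu : ∀ s, ∫⁻ z in s, ‖f z‖ₑ ∂μ = ∫⁻ z in s, u z ∂μ) {t : ℝ} (ht : 0 < t) :
    μ {x | t < maximalFunction μ f x} ≤
      ENNReal.ofReal (2 * K ^ 3 / t) * ∫⁻ z in {z | t < 2 * u z}, u z ∂μ := by
  set s := ENNReal.ofReal (t / 2) with hs
  have hs₀ : s ≠ 0 := by simpa [hs] using ht
  have hss : s + s = ENNReal.ofReal t := by
    rw [hs, ← ENNReal.ofReal_add (by positivity) (by positivity), add_halves]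
  have hlevel : {z | s < (u z : ℝ≥0∞)} = {z | t < 2 * u z} := by
    ext z
    rw [mem_ofPred_eq, mem_ofPred_eq, hs, ← ENNReal.ofReal_coe_nnreal,
      ENNReal.ofReal_lt_ofReal_iff_of_nonneg (by positivity), div_lt_iff₀' two_pos]
  have hsub : {x | t < maximalFunction μ f x} ⊆ largeAverageSet μ (fun z => u z) (s + s) := by
    simpa only [largeAverageSet, hfu, hss] using
      setOf_lt_maximalFunction_subset (μ := μ) f ht.le
  have hconst : ENNReal.ofReal (2 * K ^ 3 / t) = K ^ 3 / s := by
    rw [hs, ← ENNReal.ofReal_coe_nnreal, ← ENNReal.ofReal_pow K.coe_nonneg,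
      ← ENNReal.ofReal_div_of_pos (by positivity), div_div_eq_mul_div, mul_comm]
  rw [hconst, ← hlevel, ENNReal.mul_comm_div, ← mul_div_assoc,
    ENNReal.le_div_iff_mul_le (.inl hs₀) (.inl ENNReal.ofReal_ne_top), mul_comm]
  calc s * μ {x | t < maximalFunction μ f x}
      ≤ s * μ (largeAverageSet μ (fun z => u z) (s + s)) := by gcongr
    _ ≤ _ := hμ.mul_measure_largeAverageSet_add_self_le hu.coe_nnreal_ennreal
        ENNReal.ofReal_ne_top

lemma lintegral_maximalFunction_le (hμ : IsDoubling μ K) [IsLocallyFiniteMeasure μ] {Φ : ℝ → ℝ}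
    (hΦ : IsYoungFunction Φ) {l : ℝ} (hl : NablaTwo Φ l) (f : X → ℝ) :
    ∫⁻ x, ENNReal.ofReal (Φ (maximalFunction μ f x)) ∂μ ≤
      ∫⁻ x, ENNReal.ofReal (Φ (2 * (2 * K ^ 3) * l * |f x|)) ∂μ := by
  have hl₀ : 0 < l := one_pos.trans hl.one_lt
  have hK : (1 : ℝ) ≤ 2 * K ^ 3 := by
    have : (1 : ℝ) ≤ K ^ 3 := one_le_pow₀ (by exact_mod_cast hμ.one_le)
    linarith
  -- `f` need not be measurable, but lower integrals only see a measurable minorant of `|f|`.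
  obtain ⟨u, hu, huf, hfu⟩ := exists_measurable_le_abs_forall_setLIntegral_enorm_eq μ f
  calc ∫⁻ x, ENNReal.ofReal (Φ (maximalFunction μ f x)) ∂μ
      ≤ ∑' k : ℤ, ENNReal.ofReal (Φ (l ^ (k + 1))) * μ {x | l ^ k < maximalFunction μ f x} :=
        lintegral_ofReal_comp_le_tsum_zpow hΦ hl.one_lt (maximalFunction_nonneg f)
    _ ≤ ∑' k : ℤ, ENNReal.ofReal (Φ (l ^ (k + 1))) *
          (ENNReal.ofReal (2 * K ^ 3 / l ^ k) * ∫⁻ z in {z | l ^ k < 2 * u z}, u z ∂μ) := by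
        gcongr with k
        exact hμ.measure_lt_maximalFunction_le hu hfu (zpow_pos hl₀ k)
    _ ≤ ∫⁻ x, ENNReal.ofReal (Φ (2 * (2 * K ^ 3) * l * u x)) ∂μ :=
        hl.tsum_zpow_mul_setLIntegral_le hΦ hK hu
    _ ≤ ∫⁻ x, ENNReal.ofReal (Φ (2 * (2 * K ^ 3) * l * |f x|)) ∂μ := by
        refine lintegral_mono fun x => ENNReal.ofReal_le_ofReal
          (hΦ.monotoneOn (mem_Ici.2 (by positivity)) (mem_Ici.2 (by positivity)) ?_)
        gcongr
        exact huf x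

end IsDoubling

theorem stmt_19_general [SecondCountableTopology X] [OpensMeasurableSpace X]
    [IsLocallyFiniteMeasure μ] (hμ : IsDoubling μ K) {Φ : ℝ → ℝ} (hΦ : IsYoungFunction Φ)
    (hnabla2 : ∃ l, NablaTwo Φ l) :
    ∃ C : ℝ, 0 < C ∧ ∀ f : X → ℝ,
      ∫⁻ x, ENNReal.ofReal (Φ (maximalFunction μ f x)) ∂μ ≤
        ∫⁻ x, ENNReal.ofReal (Φ (C * |f x|)) ∂μ ∧
      (MemOrliczSpace μ Φ f →
        luxemburgNorm μ Φ (maximalFunction μ f) ≤ C * luxemburgNorm μ Φ f) := by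
  obtain ⟨l, hl⟩ := hnabla2
  have hC : 0 < 2 * (2 * K ^ 3) * l := by
    have := one_pos.trans_le hμ.one_le
    have := one_pos.trans hl.one_lt
    positivity
  have hmodular := hμ.lintegral_maximalFunction_le hΦ hl
  refine ⟨_, hC, fun f => ⟨hmodular f, fun hf =>
    luxemburgNorm_le_mul_of_lintegral_le hΦ hC hf fun lam hlam => ?_⟩⟩
  simpa only [maximalFunction_div f hlam.le, abs_div, abs_of_pos hlam,
    abs_of_nonneg (maximalFunction_nonneg f _)] using hmodular fun z => f z / lam

end Doubling

/-- if the Young function Φ satisfies the ∇2-condition, the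
Hardy–Littlewood maximal operator is of strong (Φ,Φ)-type:
∫ Φ(Mf) ≤ ∫ Φ(C|f|) for all f ∈ L^Φ(ℝⁿ), and hence ‖Mf‖_{L^Φ} ≤ C‖f‖_{L^Φ}. -/
theorem stmt_19 (n : ℕ) (Φ : ℝ → ℝ)
    (hΦ0 : Φ 0 = 0)
    (hnonneg : ∀ t, 0 ≤ t → 0 ≤ Φ t)
    (hmono : StrictMonoOn Φ (Set.Ici 0))
    (hconv : ConvexOn ℝ (Set.Ici 0) Φ)
    (hnabla2 : ∃ l : ℝ, 1 < l ∧ ∀ t > 0, 2 * l * Φ t ≤ Φ (l * t)) :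
    ∃ C : ℝ, 0 < C ∧ ∀ f : EuclideanSpace ℝ (Fin n) → ℝ, MemOrlicz Φ f →
      (∫⁻ x, ENNReal.ofReal (Φ (hlMaximal f x)))
          ≤ (∫⁻ x, ENNReal.ofReal (Φ (C * |f x|))) ∧
      luxNorm Φ (hlMaximal f) ≤ C * luxNorm Φ f := by
  obtain ⟨C, hC, hM⟩ := stmt_19_general
    (isDoubling_addHaar (volume : Measure (EuclideanSpace ℝ (Fin n))))
    ⟨hΦ0, hnonneg, hconv⟩ (hnabla2.imp fun _ hl => ⟨hl.1, hl.2⟩)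
  exact ⟨C, hC, fun f hf => ⟨(hM f).1, (hM f).2 hf⟩⟩
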